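/- Let U be an open, isotropic and bounded subset of ℝ^{2×2}. Then U^{rc} = U^{pc} = Pco U. -/

import Mathlib

open scoped BigOperators

/-- Square of the Frobenius norm of a 2×2 real matrix. -/
noncomputable def frobSq (ξ : Matrix (Fin 2) (Fin 2) ℝ) : ℝ := ∑ i, ∑ j, (ξ i j) ^ 2

/-- The Frobenius norm of a 2×2 real matrix. -/
noncomputable def frobNorm (ξ : Matrix (Fin 2) (Fin 2) ℝ) : ℝ := Real.sqrt (frobSq ξ)

/-- The smallest singular value of a 2×2 real matrix. -/
noncomputable def lam1 (ξ : Matrix (Fin 2) (Fin 2) ℝ) : ℝ :=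
  (Real.sqrt (frobSq ξ + 2 * |ξ.det|) - Real.sqrt (frobSq ξ - 2 * |ξ.det|)) / 2

/-- The largest singular value of a 2×2 real matrix. -/
noncomputable def lam2 (ξ : Matrix (Fin 2) (Fin 2) ℝ) : ℝ :=
  (Real.sqrt (frobSq ξ + 2 * |ξ.det|) + Real.sqrt (frobSq ξ - 2 * |ξ.det|)) / 2

/-- A function on 2×2 matrices is rank one convex if it is convex along rank one segments. -/
def RankOneConvex (f : Matrix (Fin 2) (Fin 2) ℝ → ℝ) : Prop :=
  ∀ (ξ η : Matrix (Fin 2) (Fin 2) ℝ) (t : ℝ), t ∈ Set.Icc (0 : ℝ) 1 →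
    (ξ - η).rank = 1 → f (t • ξ + (1 - t) • η) ≤ t * f ξ + (1 - t) * f η

/-- The rank one convex hull `E^{rc}` of a set of 2×2 matrices. -/
def rcHull (E : Set (Matrix (Fin 2) (Fin 2) ℝ)) : Set (Matrix (Fin 2) (Fin 2) ℝ) :=
  {ξ | ∀ f : Matrix (Fin 2) (Fin 2) ℝ → ℝ,
    RankOneConvex f → (∀ η ∈ E, f η ≤ 0) → f ξ ≤ 0}

/-- The rank one convex hull `U^{rc}` of an open set of 2×2 matrices. -/
def rcHullOpen (U : Set (Matrix (Fin 2) (Fin 2) ℝ)) : Set (Matrix (Fin 2) (Fin 2) ℝ) :=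
  {ξ | ∃ E : Set (Matrix (Fin 2) (Fin 2) ℝ), E ⊆ U ∧ IsCompact E ∧ ξ ∈ rcHull E}

/-- A function on 2×2 matrices is polyconvex if it is a convex function of (ξ, det ξ). -/
def PolyconvexFun (f : Matrix (Fin 2) (Fin 2) ℝ → ℝ) : Prop :=
  ∃ g : Matrix (Fin 2) (Fin 2) ℝ × ℝ → ℝ,
    ConvexOn ℝ Set.univ g ∧ ∀ ξ, f ξ = g (ξ, ξ.det)

/-- The polyconvex hull `E^{pc}` of a set of 2×2 matrices. -/
def pcHull (E : Set (Matrix (Fin 2) (Fin 2) ℝ)) : Set (Matrix (Fin 2) (Fin 2) ℝ) :=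
  {ξ | ∀ f : Matrix (Fin 2) (Fin 2) ℝ → ℝ,
    PolyconvexFun f → (∀ η ∈ E, f η ≤ 0) → f ξ ≤ 0}

/-- The polyconvex hull `U^{pc}` of an open set of 2×2 matrices. -/
def pcHullOpen (U : Set (Matrix (Fin 2) (Fin 2) ℝ)) : Set (Matrix (Fin 2) (Fin 2) ℝ) :=
  {ξ | ∃ E : Set (Matrix (Fin 2) (Fin 2) ℝ), E ⊆ U ∧ IsCompact E ∧ ξ ∈ pcHull E}

/-- A set of 2×2 matrices is polyconvex. -/
def PolyconvexSet (A : Set (Matrix (Fin 2) (Fin 2) ℝ)) : Prop :=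
  ∀ (ξ : Fin 5 → Matrix (Fin 2) (Fin 2) ℝ) (t : Fin 5 → ℝ),
    (∀ i, ξ i ∈ A) → (∀ i, 0 ≤ t i) → (∑ i, t i) = 1 →
    (∑ i, t i * (ξ i).det) = (∑ i, t i • ξ i).det →
    (∑ i, t i • ξ i) ∈ A

/-- The polyconvex hull `Pco E`: the smallest polyconvex set containing `E`. -/
def Pco (E : Set (Matrix (Fin 2) (Fin 2) ℝ)) : Set (Matrix (Fin 2) (Fin 2) ℝ) :=
  ⋂₀ {A | PolyconvexSet A ∧ E ⊆ A}

/-- A set of 2×2 matrices is isotropic if it is invariant under orthogonal transformations. -/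
def Isotropic (E : Set (Matrix (Fin 2) (Fin 2) ℝ)) : Prop :=
  ∀ R S : Matrix (Fin 2) (Fin 2) ℝ, R * R.transpose = 1 → S * S.transpose = 1 → ∀ ξ ∈ E, R * ξ * S ∈ E

/-- The distance (w.r.t. the Frobenius norm) from a matrix to a set of matrices. -/
noncomputable def distE (ξ : Matrix (Fin 2) (Fin 2) ℝ) (E : Set (Matrix (Fin 2) (Fin 2) ℝ)) : ℝ :=
  sInf ((fun η => frobNorm (ξ - η)) '' E)

/-- The function `f_θ(x,y) = xy + θ(y-x)`. -/
def ftheta (θ : ℝ) (p : ℝ × ℝ) : ℝ := p.1 * p.2 + θ * (p.2 - p.1)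

/-- The gradient of a map `u : ℝ² → ℝ²` at `x`, as a 2×2 matrix. -/
noncomputable def gradMatrix (u : (Fin 2 → ℝ) → (Fin 2 → ℝ)) (x : Fin 2 → ℝ) :
    Matrix (Fin 2) (Fin 2) ℝ :=
  LinearMap.toMatrix' (fderiv ℝ u x).toLinearMap

open Matrix Set

/-!
The lamination hull of `U` lies below `U^{rc}` and `Pco U`, and both of these lie below `U^{pc}`, so
it suffices that a lamination convex isotropic set `A` contains `pcHull E` for every compact
`E ⊆ A`. By isotropy, membership in `A` depends only on the singular values `(λ₁, λ₂)`. Along a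
suitably rotated rank-one segment the singular values run through a level curve
`f_θ = c` with `θ ^ 2 ≤ c`, so `A` contains every point of such a curve between two points of `A`.

For `ξ ∈ pcHull E` and `0 ≤ θ ≤ λ₂(ξ)`, a polyconvex function that is at least `f_θ` of the singular
values, and equal to it above the level `θ ^ 2`, produces a point `η_θ` of `E` with
`f_θ(ξ) ≤ f_θ(η_θ)`; it satisfies `λ₂(ξ) ≤ λ₂(η_θ)`, or `λ₁(ξ) ≤ λ₁(η_θ)` and `λ₂(η_θ) ≤ λ₂(ξ)`. The
parameters `θ` for which the first (the second) alternative can be realised form a closed set. For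
`θ = λ₂(ξ)` the first one holds. If it also occurs for `θ = 0`, then the level curve of
`f_0 = λ₁ λ₂` through `ξ` is used; otherwise, since an interval is connected, both alternatives
occur for a common `θ`. Shrinking the singular values of the two points onto the level curve of
`f_θ` through `ξ` puts `ξ` between them.
-/

section Determinant

variable {n K : Type*} [Field K]

lemma matrix_rank_pos_of_ne_zero {m : Type*} [Fintype n] [Finite m]
    {A : Matrix m n K} (hA : A ≠ 0) : 0 < A.rank := by
  classical
  rw [Nat.pos_iff_ne_zero, ne_eq, Matrix.rank, Submodule.finrank_eq_zero, LinearMap.range_eq_bot]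
  refine fun h => hA (Matrix.toLin'.injective ?_)
  rw [map_zero]
  exact h

lemma matrix_rank_lt_card_iff_det_eq_zero [Fintype n] [DecidableEq n] {A : Matrix n n K} :
    A.rank < Fintype.card n ↔ A.det = 0 := by
  refine ⟨fun h => not_not.mp fun hdet => h.ne (rank_of_det_ne_zero hdet), fun hdet => ?_⟩
  refine A.rank_le_card_width.lt_of_ne fun hrank => ?_
  have hrange : LinearMap.range A.mulVecLin = ⊤ :=
    Submodule.eq_top_of_finrank_eq (by rw [Module.finrank_fintype_fun_eq_card]; exact hrank)
  have hunit : IsUnit A :=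
    Matrix.mulVec_surjective_iff_isUnit.mp (LinearMap.range_eq_top.mp hrange)
  exact not_isUnit_zero (hdet ▸ (A.isUnit_iff_isUnit_det.mp hunit))

lemma rank_eq_one_iff_det_eq_zero {A : Matrix (Fin 2) (Fin 2) K} (hA : A ≠ 0) :
    A.rank = 1 ↔ A.det = 0 := by
  have hpos := matrix_rank_pos_of_ne_zero hA
  rw [← matrix_rank_lt_card_iff_det_eq_zero, Fintype.card_fin]
  omega

lemma det_smul_add_smul_of_det_sub_eq_zero {R : Type*} [CommRing R]
    {ξ η : Matrix (Fin 2) (Fin 2) R} (h : (ξ - η).det = 0) {s t : R} (hst : s + t = 1) :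
    (s • ξ + t • η).det = s * ξ.det + t * η.det := by
  obtain rfl := eq_sub_of_add_eq hst
  simp only [Matrix.det_fin_two, Matrix.sub_apply, Matrix.add_apply, Matrix.smul_apply,
    smul_eq_mul] at *
  linear_combination (-((1 - t) * t)) * h

end Determinant

section Hulls

variable {E F U A : Set (Matrix (Fin 2) (Fin 2) ℝ)} {f : Matrix (Fin 2) (Fin 2) ℝ → ℝ}
  {ξ : Matrix (Fin 2) (Fin 2) ℝ}

/-- A set of 2×2 matrices is lamination convex if it contains every segment joining two of its
points along a matrix of rank at most one; this rank condition is expressed by the determinant. -/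
def LaminationConvex (A : Set (Matrix (Fin 2) (Fin 2) ℝ)) : Prop :=
  ∀ ξ ∈ A, ∀ η ∈ A, (ξ - η).det = 0 → segment ℝ ξ η ⊆ A

/-- The lamination hull: the smallest lamination convex set containing `E`. It lies below all the
hulls of the theorem, which are therefore equal as soon as it contains the largest of them. -/
def laminationHull (E : Set (Matrix (Fin 2) (Fin 2) ℝ)) : Set (Matrix (Fin 2) (Fin 2) ℝ) :=
  ⋂₀ {A | LaminationConvex A ∧ E ⊆ A}

lemma subset_laminationHull : E ⊆ laminationHull E := subset_sInter fun _ hA => hA.2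

lemma laminationHull_subset (hA : LaminationConvex A) (hEA : E ⊆ A) : laminationHull E ⊆ A :=
  sInter_subset_of_mem ⟨hA, hEA⟩

lemma laminationConvex_laminationHull : LaminationConvex (laminationHull E) :=
  fun ξ hξ η hη hdet _ hζ A hA => hA.1 ξ (hξ A hA) η (hη A hA) hdet hζ

lemma PolyconvexSet.laminationConvex (hA : PolyconvexSet A) : LaminationConvex A := by
  rintro ξ hξ η hη hdet _ ⟨s, t, hs, ht, hst, rfl⟩
  have hcomb := hA ![ξ, η, η, η, η] ![s, t, 0, 0, 0]
    (by intro i; fin_cases i <;> simp [hξ, hη])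
    (by intro i; fin_cases i <;> simp [hs, ht])
    (by simpa [Fin.sum_univ_five] using hst)
    (by simp [Fin.sum_univ_five, det_smul_add_smul_of_det_sub_eq_zero hdet hst])
  simpa [Fin.sum_univ_five] using hcomb

lemma RankOneConvex.laminationConvex_sublevel (hf : RankOneConvex f) (c : ℝ) :
    LaminationConvex {ξ | f ξ ≤ c} := by
  rintro ξ hξ η hη hdet _ ⟨s, t, hs, ht, hst, rfl⟩
  obtain rfl := eq_sub_of_add_eq' hst
  by_cases hne : ξ - η = 0
  · rwa [sub_eq_zero.mp hne, ← add_smul, hst, one_smul]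
  · have hconv := hf ξ η s ⟨hs, sub_nonneg.mp ht⟩ ((rank_eq_one_iff_det_eq_zero hne).mpr hdet)
    calc f (s • ξ + (1 - s) • η) ≤ s * f ξ + (1 - s) * f η := hconv
      _ ≤ s * c + (1 - s) * c := by gcongr <;> assumption
      _ = c := by ring

lemma PolyconvexFun.polyconvexSet_sublevel (hf : PolyconvexFun f) (c : ℝ) :
    PolyconvexSet {ξ | f ξ ≤ c} := by
  obtain ⟨g, hg, hfg⟩ := hf
  intro ξ t hξ ht hsum hdet
  have hcomb : ∑ i, t i • (ξ i, (ξ i).det) = (∑ i, t i • ξ i, (∑ i, t i • ξ i).det) := by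
    rw [← hdet]
    ext1 <;> simp [Prod.fst_sum, Prod.snd_sum]
  calc f (∑ i, t i • ξ i) = g (∑ i, t i • (ξ i, (ξ i).det)) := by rw [hfg, hcomb]
    _ ≤ ∑ i, t i * f (ξ i) := by
      simpa only [hfg, smul_eq_mul] using
        hg.map_sum_le (fun i _ => ht i) hsum (fun i _ => mem_univ (ξ i, (ξ i).det))
    _ ≤ ∑ i, t i * c := Finset.sum_le_sum fun i _ => mul_le_mul_of_nonneg_left (hξ i) (ht i)
    _ = c := by rw [← Finset.sum_mul, hsum, one_mul]

lemma PolyconvexFun.rankOneConvex (hf : PolyconvexFun f) : RankOneConvex f := by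
  obtain ⟨g, hg, hfg⟩ := hf
  intro ξ η t ht hrank
  have hdet : (ξ - η).det = 0 :=
    matrix_rank_lt_card_iff_det_eq_zero.mp (by rw [hrank, Fintype.card_fin]; exact one_lt_two)
  have hconv := hg.2 (mem_univ (ξ, ξ.det)) (mem_univ (η, η.det)) ht.1 (sub_nonneg.mpr ht.2)
    (add_sub_cancel t 1)
  simpa [hfg, det_smul_add_smul_of_det_sub_eq_zero hdet (add_sub_cancel t 1)] using hconv

lemma PolyconvexFun.sub_const (hf : PolyconvexFun f) (c : ℝ) :
    PolyconvexFun fun ξ => f ξ - c := by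
  obtain ⟨g, hg, hfg⟩ := hf
  exact ⟨fun X => g X + -c, hg.add_const (-c), fun ξ => by simp only [hfg, sub_eq_add_neg]⟩

lemma polyconvexFun_const (c : ℝ) : PolyconvexFun fun _ => c :=
  ⟨fun _ => c, convexOn_const c convex_univ, fun _ => rfl⟩

open scoped Matrix.Norms.Elementwise in
lemma PolyconvexFun.continuous (hf : PolyconvexFun f) : Continuous f := by
  obtain ⟨g, hg, hfg⟩ := hf
  have hg_cont : Continuous g := continuousOn_univ.mp (hg.continuousOn isOpen_univ)
  rw [funext hfg]
  exact hg_cont.comp (continuous_id.prodMk (continuous_id.matrix_det))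

lemma pcHull_empty : pcHull ∅ = ∅ := by
  refine eq_empty_of_forall_notMem fun ξ hξ => ?_
  exact one_pos.not_ge (hξ (fun _ => 1) (polyconvexFun_const 1) (by simp))

lemma exists_le_of_mem_pcHull (hf : PolyconvexFun f) (hE : IsCompact E) (hξ : ξ ∈ pcHull E) :
    ∃ η ∈ E, f ξ ≤ f η := by
  have hne : E.Nonempty := by
    rw [nonempty_iff_ne_empty]
    rintro rfl
    simp [pcHull_empty] at hξ
  obtain ⟨η, hη, hmax⟩ := hE.exists_isMaxOn hne hf.continuous.continuousOn
  exact ⟨η, hη, sub_nonpos.mp (hξ _ (hf.sub_const (f η)) fun ζ hζ => sub_nonpos.mpr (hmax hζ))⟩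

lemma subset_rcHull : E ⊆ rcHull E := fun _ hξ _ _ hle => hle _ hξ

lemma subset_pcHull : E ⊆ pcHull E := fun _ hξ _ _ hle => hle _ hξ

lemma rcHull_subset_pcHull : rcHull E ⊆ pcHull E :=
  fun _ hξ f hf hle => hξ f hf.rankOneConvex hle

lemma rcHull_mono (h : E ⊆ F) : rcHull E ⊆ rcHull F :=
  fun _ hξ f hf hle => hξ f hf fun η hη => hle η (h hη)

lemma pcHull_mono (h : E ⊆ F) : pcHull E ⊆ pcHull F :=
  fun _ hξ f hf hle => hξ f hf fun η hη => hle η (h hη)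

lemma laminationConvex_rcHull : LaminationConvex (rcHull E) :=
  fun ξ hξ η hη hdet _ hζ f hf hle =>
    hf.laminationConvex_sublevel 0 ξ (hξ f hf hle) η (hη f hf hle) hdet hζ

lemma polyconvexSet_pcHull : PolyconvexSet (pcHull E) :=
  fun ξ t hξ ht hsum hdet f hf hle =>
    hf.polyconvexSet_sublevel 0 ξ t (fun i => hξ i f hf hle) ht hsum hdet

lemma subset_rcHullOpen : U ⊆ rcHullOpen U :=
  fun ξ hξ => ⟨{ξ}, singleton_subset_iff.mpr hξ, isCompact_singleton, subset_rcHull rfl⟩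

lemma subset_pcHullOpen : U ⊆ pcHullOpen U :=
  fun ξ hξ => ⟨{ξ}, singleton_subset_iff.mpr hξ, isCompact_singleton, subset_pcHull rfl⟩

lemma rcHullOpen_subset_pcHullOpen : rcHullOpen U ⊆ pcHullOpen U :=
  fun _ ⟨E, hEU, hE, hξ⟩ => ⟨E, hEU, hE, rcHull_subset_pcHull hξ⟩

lemma laminationConvex_rcHullOpen : LaminationConvex (rcHullOpen U) := by
  rintro ξ ⟨E, hEU, hE, hξ⟩ η ⟨F, hFU, hF, hη⟩ hdet ζ hζ
  exact ⟨E ∪ F, union_subset hEU hFU, hE.union hF, laminationConvex_rcHull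
    ξ (rcHull_mono subset_union_left hξ) η (rcHull_mono subset_union_right hη) hdet hζ⟩

lemma polyconvexSet_pcHullOpen : PolyconvexSet (pcHullOpen U) := by
  intro ξ t hξ ht hsum hdet
  choose E hEU hE hξE using hξ
  exact ⟨⋃ i, E i, iUnion_subset hEU, isCompact_iUnion hE, polyconvexSet_pcHull
    ξ t (fun i => pcHull_mono (subset_iUnion E i) (hξE i)) ht hsum hdet⟩

lemma Pco_subset_pcHullOpen : Pco U ⊆ pcHullOpen U :=
  sInter_subset_of_mem ⟨polyconvexSet_pcHullOpen, subset_pcHullOpen⟩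

lemma laminationHull_subset_rcHullOpen : laminationHull U ⊆ rcHullOpen U :=
  laminationHull_subset laminationConvex_rcHullOpen subset_rcHullOpen

lemma laminationHull_subset_Pco : laminationHull U ⊆ Pco U :=
  subset_sInter fun _ hA => laminationHull_subset hA.1.laminationConvex hA.2

end Hulls

section SingularValues

/-- The conformal part of a real 2×2 matrix: identifying ℝ² with ℂ, the matrix acts as
`v ↦ z * v + w * conj v`, and this is `z`. -/
noncomputable def conformalPart : Matrix (Fin 2) (Fin 2) ℝ →ₗ[ℝ] ℂ where
  toFun ξ := ⟨(ξ 0 0 + ξ 1 1) / 2, (ξ 1 0 - ξ 0 1) / 2⟩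
  map_add' ξ η := by apply Complex.ext <;> simp <;> ring
  map_smul' c ξ := by apply Complex.ext <;> simp <;> ring

/-- The anticonformal part of a real 2×2 matrix, i.e. `w` when the matrix is written as
`v ↦ z * v + w * conj v` on ℂ. -/
noncomputable def anticonformalPart : Matrix (Fin 2) (Fin 2) ℝ →ₗ[ℝ] ℂ where
  toFun ξ := ⟨(ξ 0 0 - ξ 1 1) / 2, (ξ 1 0 + ξ 0 1) / 2⟩
  map_add' ξ η := by apply Complex.ext <;> simp <;> ring
  map_smul' c ξ := by apply Complex.ext <;> simp <;> ring

lemma frobSq_of (a b c d : ℝ) : frobSq !![a, b; c, d] = a ^ 2 + b ^ 2 + c ^ 2 + d ^ 2 := by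
  simp [frobSq, Fin.sum_univ_two, add_assoc]

lemma two_mul_norm_conformalPart_sq (ξ : Matrix (Fin 2) (Fin 2) ℝ) :
    (2 * ‖conformalPart ξ‖) ^ 2 = frobSq ξ + 2 * ξ.det := by
  rw [mul_pow, Complex.sq_norm, Complex.normSq_apply, Matrix.det_fin_two]
  simp only [conformalPart, LinearMap.coe_mk, AddHom.coe_mk, frobSq, Fin.sum_univ_two]
  ring

lemma two_mul_norm_anticonformalPart_sq (ξ : Matrix (Fin 2) (Fin 2) ℝ) :
    (2 * ‖anticonformalPart ξ‖) ^ 2 = frobSq ξ - 2 * ξ.det := by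
  rw [mul_pow, Complex.sq_norm, Complex.normSq_apply, Matrix.det_fin_two]
  simp only [anticonformalPart, LinearMap.coe_mk, AddHom.coe_mk, frobSq, Fin.sum_univ_two]
  ring

lemma two_mul_norm_conformalPart (ξ : Matrix (Fin 2) (Fin 2) ℝ) :
    2 * ‖conformalPart ξ‖ = √(frobSq ξ + 2 * ξ.det) := by
  rw [← two_mul_norm_conformalPart_sq, Real.sqrt_sq (by positivity)]

lemma two_mul_norm_anticonformalPart (ξ : Matrix (Fin 2) (Fin 2) ℝ) :
    2 * ‖anticonformalPart ξ‖ = √(frobSq ξ - 2 * ξ.det) := by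
  rw [← two_mul_norm_anticonformalPart_sq, Real.sqrt_sq (by positivity)]

lemma two_mul_abs_det_le_frobSq (ξ : Matrix (Fin 2) (Fin 2) ℝ) : 2 * |ξ.det| ≤ frobSq ξ := by
  have hz := two_mul_norm_conformalPart_sq ξ ▸ sq_nonneg _
  have hw := two_mul_norm_anticonformalPart_sq ξ ▸ sq_nonneg _
  cases abs_cases ξ.det <;> linarith

lemma lam1_add_lam2 (ξ : Matrix (Fin 2) (Fin 2) ℝ) :
    lam1 ξ + lam2 ξ = √(frobSq ξ + 2 * |ξ.det|) := by
  rw [lam1, lam2]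
  ring

lemma lam2_sub_lam1 (ξ : Matrix (Fin 2) (Fin 2) ℝ) :
    lam2 ξ - lam1 ξ = √(frobSq ξ - 2 * |ξ.det|) := by
  rw [lam1, lam2]
  ring

lemma lam1_add_lam2_sq (ξ : Matrix (Fin 2) (Fin 2) ℝ) :
    (lam1 ξ + lam2 ξ) ^ 2 = frobSq ξ + 2 * |ξ.det| := by
  rw [lam1_add_lam2,
    Real.sq_sqrt (by linarith [two_mul_abs_det_le_frobSq ξ, abs_nonneg ξ.det])]

lemma lam2_sub_lam1_sq (ξ : Matrix (Fin 2) (Fin 2) ℝ) :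
    (lam2 ξ - lam1 ξ) ^ 2 = frobSq ξ - 2 * |ξ.det| := by
  rw [lam2_sub_lam1, Real.sq_sqrt (by linarith [two_mul_abs_det_le_frobSq ξ])]

lemma lam1_mul_lam2 (ξ : Matrix (Fin 2) (Fin 2) ℝ) : lam1 ξ * lam2 ξ = |ξ.det| := by
  linear_combination (lam1_add_lam2_sq ξ - lam2_sub_lam1_sq ξ) / 4

lemma lam1_sq_add_lam2_sq (ξ : Matrix (Fin 2) (Fin 2) ℝ) :
    lam1 ξ ^ 2 + lam2 ξ ^ 2 = frobSq ξ := by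
  linear_combination (lam1_add_lam2_sq ξ + lam2_sub_lam1_sq ξ) / 2

lemma lam1_nonneg (ξ : Matrix (Fin 2) (Fin 2) ℝ) : 0 ≤ lam1 ξ :=
  div_nonneg (sub_nonneg.mpr (Real.sqrt_le_sqrt (by linarith [abs_nonneg ξ.det]))) zero_le_two

lemma lam1_le_lam2 (ξ : Matrix (Fin 2) (Fin 2) ℝ) : lam1 ξ ≤ lam2 ξ :=
  sub_nonneg.mp (lam2_sub_lam1 ξ ▸ Real.sqrt_nonneg _)

lemma continuous_frobSq : Continuous frobSq := by
  unfold frobSq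
  fun_prop

lemma continuous_lam1 : Continuous lam1 := by
  have := continuous_frobSq
  unfold lam1
  fun_prop

lemma continuous_lam2 : Continuous lam2 := by
  have := continuous_frobSq
  unfold lam2
  fun_prop

end SingularValues

section Isotropy

variable {A E : Set (Matrix (Fin 2) (Fin 2) ℝ)} {R S ξ η : Matrix (Fin 2) (Fin 2) ℝ}

lemma Isotropic.mul_mul_mem_iff (hA : Isotropic A) (hR : R * Rᵀ = 1) (hS : S * Sᵀ = 1) :
    R * ξ * S ∈ A ↔ ξ ∈ A := by
  refine ⟨fun h => ?_, hA R S hR hS ξ⟩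
  have hR' : Rᵀ * R = 1 := mul_eq_one_comm.mp hR
  have hS' : Sᵀ * S = 1 := mul_eq_one_comm.mp hS
  have hback := hA Rᵀ Sᵀ (by rwa [transpose_transpose]) (by rwa [transpose_transpose]) _ h
  rwa [show Rᵀ * (R * ξ * S) * Sᵀ = Rᵀ * R * ξ * (S * Sᵀ) by simp only [Matrix.mul_assoc],
    hR', hS, Matrix.one_mul, Matrix.mul_one] at hback

lemma LaminationConvex.preimage_mul_mul (hA : LaminationConvex A) :
    LaminationConvex {ξ | R * ξ * S ∈ A} := by
  rintro ξ hξ η hη hdet _ ⟨s, t, hs, ht, hst, rfl⟩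
  refine hA _ hξ _ hη ?_ ⟨s, t, hs, ht, hst, ?_⟩
  · rw [← Matrix.sub_mul, ← Matrix.mul_sub, det_mul, det_mul, hdet, mul_zero, zero_mul]
  · simp only [Matrix.mul_add, Matrix.add_mul, Matrix.mul_smul, Matrix.smul_mul]

lemma isotropic_laminationHull (hE : Isotropic E) : Isotropic (laminationHull E) :=
  fun R S hR hS _ hξ _ hA =>
    laminationHull_subset hA.1.preimage_mul_mul (fun η hη => hA.2 (hE R S hR hS η hη)) hξ

/-- The matrix of the rotation of the plane by the angle `α`. -/
noncomputable def rotationMatrix (α : ℝ) : Matrix (Fin 2) (Fin 2) ℝ :=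
  !![Real.cos α, -Real.sin α; Real.sin α, Real.cos α]

lemma rotationMatrix_mul_transpose (α : ℝ) : rotationMatrix α * (rotationMatrix α)ᵀ = 1 := by
  ext i j
  fin_cases i <;> fin_cases j <;>
    simp [rotationMatrix, Matrix.mul_apply, Fin.sum_univ_two, ← sq, mul_comm]

lemma exists_eq_rotationMatrix_mul_mul (ξ : Matrix (Fin 2) (Fin 2) ℝ) : ∃ σ τ : ℝ,
    ξ = rotationMatrix σ * !![‖conformalPart ξ‖ + ‖anticonformalPart ξ‖, 0;
      0, ‖conformalPart ξ‖ - ‖anticonformalPart ξ‖] * rotationMatrix τ := by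
  -- Rotations by `σ` and `τ` add `σ + τ` to the argument of the conformal part, and `σ - τ` to
  -- that of the anticonformal part.
  obtain ⟨σ, τ, hα, hβ⟩ : ∃ σ τ : ℝ, (conformalPart ξ).arg = σ + τ ∧
      (anticonformalPart ξ).arg = σ - τ :=
    ⟨((conformalPart ξ).arg + (anticonformalPart ξ).arg) / 2,
      ((conformalPart ξ).arg - (anticonformalPart ξ).arg) / 2, by ring, by ring⟩
  have hz_re : ‖conformalPart ξ‖ * Real.cos (conformalPart ξ).arg = (ξ 0 0 + ξ 1 1) / 2 :=
    Complex.norm_mul_cos_arg _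
  have hz_im : ‖conformalPart ξ‖ * Real.sin (conformalPart ξ).arg = (ξ 1 0 - ξ 0 1) / 2 :=
    Complex.norm_mul_sin_arg _
  have hw_re : ‖anticonformalPart ξ‖ * Real.cos (anticonformalPart ξ).arg =
      (ξ 0 0 - ξ 1 1) / 2 := Complex.norm_mul_cos_arg _
  have hw_im : ‖anticonformalPart ξ‖ * Real.sin (anticonformalPart ξ).arg =
      (ξ 1 0 + ξ 0 1) / 2 := Complex.norm_mul_sin_arg _
  rw [hα, Real.cos_add] at hz_re
  rw [hα, Real.sin_add] at hz_im
  rw [hβ, Real.cos_sub] at hw_re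
  rw [hβ, Real.sin_sub] at hw_im
  refine ⟨σ, τ, ?_⟩
  ext i j
  fin_cases i <;> fin_cases j <;>
    simp [rotationMatrix, Matrix.mul_apply, Fin.sum_univ_two] <;> linarith

lemma Isotropic.mem_iff_diag_norm (hA : Isotropic A) :
    ξ ∈ A ↔ !![‖conformalPart ξ‖ + ‖anticonformalPart ξ‖, 0;
      0, ‖conformalPart ξ‖ - ‖anticonformalPart ξ‖] ∈ A := by
  obtain ⟨σ, τ, h⟩ := exists_eq_rotationMatrix_mul_mul ξ
  conv_lhs => rw [h]
  exact hA.mul_mul_mem_iff (rotationMatrix_mul_transpose σ) (rotationMatrix_mul_transpose τ)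

lemma Isotropic.mem_iff_of_frobSq_eq_of_det_eq (hA : Isotropic A) (hfrob : frobSq ξ = frobSq η)
    (hdet : ξ.det = η.det) : ξ ∈ A ↔ η ∈ A := by
  have hz : 2 * ‖conformalPart ξ‖ = 2 * ‖conformalPart η‖ := by
    simp only [two_mul_norm_conformalPart, hfrob, hdet]
  have hw : 2 * ‖anticonformalPart ξ‖ = 2 * ‖anticonformalPart η‖ := by
    simp only [two_mul_norm_anticonformalPart, hfrob, hdet]
  rw [hA.mem_iff_diag_norm, hA.mem_iff_diag_norm (ξ := η), mul_left_cancel₀ two_ne_zero hz,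
    mul_left_cancel₀ two_ne_zero hw]

lemma Isotropic.mem_iff_of_frobSq_eq_of_abs_det_eq (hA : Isotropic A)
    (hfrob : frobSq ξ = frobSq η) (hdet : |ξ.det| = |η.det|) : ξ ∈ A ↔ η ∈ A := by
  rcases abs_eq_abs.mp hdet with h | h
  · exact hA.mem_iff_of_frobSq_eq_of_det_eq hfrob h
  · let T : Matrix (Fin 2) (Fin 2) ℝ := !![1, 0; 0, -1]
    have hT : T * Tᵀ = 1 := by
      ext i j
      fin_cases i <;> fin_cases j <;> simp [T, Matrix.mul_apply]
    have hfrobT : frobSq (1 * η * T) = frobSq η := by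
      simp [frobSq, T, Matrix.mul_apply, Fin.sum_univ_two]
    rw [← hA.mul_mul_mem_iff (ξ := η) (by simp : (1 : Matrix (Fin 2) (Fin 2) ℝ) * 1ᵀ = 1) hT]
    exact hA.mem_iff_of_frobSq_eq_of_det_eq (hfrob.trans hfrobT.symm)
      (by simp [T, h, Matrix.det_fin_two_of])

lemma Isotropic.mem_iff_diag_lam (hA : Isotropic A) :
    ξ ∈ A ↔ !![lam1 ξ, 0; 0, lam2 ξ] ∈ A := by
  apply hA.mem_iff_of_frobSq_eq_of_abs_det_eq
  · rw [frobSq_of, ← lam1_sq_add_lam2_sq]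
    ring
  · rw [det_fin_two_of, lam1_mul_lam2, mul_zero, sub_zero, abs_abs]

end Isotropy

section SeparatingFunction

variable {θ : ℝ} {ξ : Matrix (Fin 2) (Fin 2) ℝ}

/-- The polyconvex function separating a matrix from a hull. By `sepFun_eq_max` it is isotropic, and
above the level `θ ^ 2` it is `ftheta θ` of the singular values, a function which is not itself
polyconvex for `0 < θ`. -/
noncomputable def sepFun (θ : ℝ) (ξ : Matrix (Fin 2) (Fin 2) ℝ) : ℝ :=
  max (ξ.det + θ * (2 * ‖anticonformalPart ξ‖)) (-ξ.det + θ * (2 * ‖conformalPart ξ‖))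

lemma polyconvexFun_sepFun (hθ : 0 ≤ θ) : PolyconvexFun (sepFun θ) := by
  have hnorm (L : Matrix (Fin 2) (Fin 2) ℝ →ₗ[ℝ] ℂ) :
      ConvexOn ℝ univ fun X : Matrix (Fin 2) (Fin 2) ℝ × ℝ => θ * (2 * ‖L X.1‖) :=
    ((convexOn_univ_norm.comp_linearMap (L.comp (LinearMap.fst ℝ _ ℝ))).smul zero_le_two).smul hθ
  have hdet (c : ℝ) : ConvexOn ℝ univ fun X : Matrix (Fin 2) (Fin 2) ℝ × ℝ => c * X.2 :=
    (c • LinearMap.snd ℝ (Matrix (Fin 2) (Fin 2) ℝ) ℝ).convexOn convex_univ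
  refine ⟨_, ((hdet 1).add (hnorm anticonformalPart)).sup ((hdet (-1)).add (hnorm conformalPart)),
    fun ξ => ?_⟩
  simp [sepFun]

lemma sepFun_eq_max (θ : ℝ) (ξ : Matrix (Fin 2) (Fin 2) ℝ) :
    sepFun θ ξ = max (ftheta θ (lam1 ξ, lam2 ξ))
      (θ * (lam1 ξ + lam2 ξ) - lam1 ξ * lam2 ξ) := by
  rw [sepFun, ftheta, two_mul_norm_conformalPart, two_mul_norm_anticonformalPart]
  dsimp only
  rw [lam1_add_lam2, lam2_sub_lam1, lam1_mul_lam2]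
  rcases abs_cases ξ.det with ⟨h, -⟩ | ⟨h, -⟩ <;> rw [h]
  · rw [neg_add_eq_sub]
  · rw [max_comm, mul_neg, sub_neg_eq_add, sub_neg_eq_add, ← sub_eq_add_neg, add_comm (θ * _)]

lemma ftheta_eq_mul_add_sq (θ x y : ℝ) : ftheta θ (x, y) = (x + θ) * (y - θ) + θ ^ 2 := by
  rw [ftheta]
  ring

lemma sq_le_ftheta {x y : ℝ} (hx : 0 ≤ x) (hθ : 0 ≤ θ) (hθy : θ ≤ y) :
    θ ^ 2 ≤ ftheta θ (x, y) := by
  rw [ftheta_eq_mul_add_sq]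
  exact le_add_of_nonneg_left (mul_nonneg (add_nonneg hx hθ) (sub_nonneg.mpr hθy))

lemma sepFun_le_ftheta (h : θ ^ 2 ≤ sepFun θ ξ) :
    sepFun θ ξ ≤ ftheta θ (lam1 ξ, lam2 ξ) := by
  have hx := lam1_nonneg ξ
  have hxy := lam1_le_lam2 ξ
  rw [sepFun_eq_max] at h ⊢
  generalize lam1 ξ = x at *
  generalize lam2 ξ = y at *
  have hother : θ * (x + y) - x * y = θ ^ 2 - (θ - x) * (θ - y) := by ring
  refine max_le le_rfl ?_
  rcases le_or_gt θ y with hy | hy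
  · have hdiff : ftheta θ (x, y) - (θ * (x + y) - x * y) = 2 * x * (y - θ) := by
      rw [ftheta]
      ring
    have := mul_nonneg hx (sub_nonneg.mpr hy)
    linarith
  · have hlt_left : ftheta θ (x, y) < θ ^ 2 := by
      rw [ftheta_eq_mul_add_sq]
      nlinarith
    have hlt_right : θ * (x + y) - x * y < θ ^ 2 := by
      rw [hother]
      nlinarith
    exact absurd h (max_lt hlt_left hlt_right).not_ge

lemma exists_ftheta_le_of_mem_pcHull {E : Set (Matrix (Fin 2) (Fin 2) ℝ)} (hE : IsCompact E)
    (hξ : ξ ∈ pcHull E) (hθ : θ ∈ Icc 0 (lam2 ξ)) :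
    ∃ η ∈ E, ftheta θ (lam1 ξ, lam2 ξ) ≤ ftheta θ (lam1 η, lam2 η) := by
  obtain ⟨η, hη, hle⟩ := exists_le_of_mem_pcHull (polyconvexFun_sepFun hθ.1) hE hξ
  have hξη : ftheta θ (lam1 ξ, lam2 ξ) ≤ sepFun θ η :=
    (le_max_left _ _).trans ((sepFun_eq_max θ ξ).ge.trans hle)
  exact ⟨η, hη, hξη.trans
    (sepFun_le_ftheta ((sq_le_ftheta (lam1_nonneg ξ) hθ.1 hθ.2).trans hξη))⟩

end SeparatingFunction

section LevelCurves

variable {A : Set (Matrix (Fin 2) (Fin 2) ℝ)} {x y x₁ y₁ x₂ y₂ θ p q : ℝ}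

lemma LaminationConvex.corner_mem (hL : LaminationConvex A) {b c d m m₁ m₂ : ℝ}
    (h₁ : !![m₁, b; c, d] ∈ A) (h₂ : !![m₂, b; c, d] ∈ A) (hm : m ∈ Icc m₁ m₂) :
    !![m, b; c, d] ∈ A := by
  rw [← segment_eq_Icc (hm.1.trans hm.2)] at hm
  obtain ⟨s, t, hs, ht, hst, rfl⟩ := hm
  refine hL _ h₁ _ h₂ (by simp [det_fin_two]) ⟨s, t, hs, ht, hst, ?_⟩
  ext i j
  fin_cases i <;> fin_cases j <;> simp [← add_mul, hst]

lemma Isotropic.diag_swap_mem (hA : Isotropic A) (h : !![x, 0; 0, y] ∈ A) :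
    !![y, 0; 0, x] ∈ A := by
  refine (hA.mem_iff_of_frobSq_eq_of_abs_det_eq ?_ ?_).mp h
  · rw [frobSq_of, frobSq_of]
    ring
  · rw [det_fin_two_of, det_fin_two_of, mul_comm x y]

lemma Isotropic.diag_neg_mem (hA : Isotropic A) (h : !![x, 0; 0, y] ∈ A) :
    !![-x, 0; 0, y] ∈ A := by
  refine (hA.mem_iff_of_frobSq_eq_of_abs_det_eq ?_ ?_).mp h
  · rw [frobSq_of, frobSq_of, neg_sq]
  · simp [det_fin_two_of, abs_mul]

lemma Isotropic.mem_iff_diag_of_sq_eq_ftheta (hA : Isotropic A) {k : ℝ}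
    (hk : k ^ 2 = ftheta θ (x, y) - θ ^ 2) :
    !![y - x - θ, -k; k, -θ] ∈ A ↔ !![x, 0; 0, y] ∈ A := by
  rw [ftheta] at hk
  apply hA.mem_iff_of_frobSq_eq_of_abs_det_eq
  · rw [frobSq_of, frobSq_of]
    linear_combination 2 * hk
  · rw [det_fin_two_of, det_fin_two_of]
    congr 1
    linear_combination hk

-- Matrices whose singular values lie on a level curve of `ftheta θ` can be rotated so that only
-- their upper left entry varies along the curve.
lemma diag_mem_of_ftheta_eq (hA : Isotropic A) (hL : LaminationConvex A)
    (h₁ : !![x₁, 0; 0, y₁] ∈ A) (h₂ : !![x₂, 0; 0, y₂] ∈ A)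
    (hlevel : θ ^ 2 ≤ ftheta θ (x, y)) (hlevel₁ : ftheta θ (x₁, y₁) = ftheta θ (x, y))
    (hlevel₂ : ftheta θ (x₂, y₂) = ftheta θ (x, y)) (hdiff : y - x ∈ Icc (y₁ - x₁) (y₂ - x₂)) :
    !![x, 0; 0, y] ∈ A := by
  obtain ⟨k, hk⟩ : ∃ k, k ^ 2 = ftheta θ (x, y) - θ ^ 2 :=
    ⟨_, Real.sq_sqrt (sub_nonneg.mpr hlevel)⟩
  rw [← hA.mem_iff_diag_of_sq_eq_ftheta (hk.trans (by rw [hlevel₁]))] at h₁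
  rw [← hA.mem_iff_diag_of_sq_eq_ftheta (hk.trans (by rw [hlevel₂]))] at h₂
  rw [← hA.mem_iff_diag_of_sq_eq_ftheta hk]
  exact hL.corner_mem h₁ h₂ ⟨sub_le_sub_right hdiff.1 θ, sub_le_sub_right hdiff.2 θ⟩

lemma diag_mem_of_abs_le_left (hA : Isotropic A) (hL : LaminationConvex A)
    (h : !![x₁, 0; 0, y] ∈ A) (hx : |x| ≤ x₁) : !![x, 0; 0, y] ∈ A :=
  hL.corner_mem (hA.diag_neg_mem h) h (abs_le.mp hx)

lemma diag_mem_of_abs_le (hA : Isotropic A) (hL : LaminationConvex A)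
    (h : !![x₁, 0; 0, y₁] ∈ A) (hx : |x| ≤ x₁) (hy : |y| ≤ y₁) : !![x, 0; 0, y] ∈ A :=
  hA.diag_swap_mem (diag_mem_of_abs_le_left hA hL
    (hA.diag_swap_mem (diag_mem_of_abs_le_left hA hL h hx)) hy)

-- Move from `(0, q - p)` up to `(0, y₂)` and then right to `(min x₂ p, y₂)`: `ftheta θ` passes
-- through its value at `(p, q)` on one of the two legs.
lemma exists_diag_mem_ftheta_eq_sub_le (hA : Isotropic A) (hL : LaminationConvex A)
    (h : !![x₂, 0; 0, y₂] ∈ A) (hx₂ : 0 ≤ x₂) (hp : 0 ≤ p) (hpq : p ≤ q) (hθ : θ ∈ Icc 0 q)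
    (hq : q ≤ y₂) (hle : ftheta θ (p, q) ≤ ftheta θ (x₂, y₂)) :
    ∃ x y, !![x, 0; 0, y] ∈ A ∧ ftheta θ (x, y) = ftheta θ (p, q) ∧ q - p ≤ y - x := by
  have hstart : ftheta θ (0, q - p) ≤ ftheta θ (p, q) := by
    simpa [ftheta] using mul_nonneg hp (hp.trans hpq)
  rcases le_total (ftheta θ (p, q)) (ftheta θ (0, y₂)) with hcorner | hcorner
  · obtain ⟨y, hy, hlevel⟩ := intermediate_value_Icc (by linarith)
      (f := fun y => ftheta θ (0, y)) (by unfold ftheta; fun_prop) ⟨hstart, hcorner⟩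
    refine ⟨0, y, diag_mem_of_abs_le hA hL h (by rwa [abs_zero]) ?_, hlevel, by linarith [hy.1]⟩
    exact (abs_of_nonneg ((sub_nonneg.mpr hpq).trans hy.1)).trans_le hy.2
  · have hend : ftheta θ (p, q) ≤ ftheta θ (min x₂ p, y₂) := by
      rcases min_choice x₂ p with hmin | hmin <;> rw [hmin]
      · exact hle
      · rw [ftheta_eq_mul_add_sq, ftheta_eq_mul_add_sq]
        have := add_nonneg hp hθ.1
        gcongr
    obtain ⟨x, hx, hlevel⟩ := intermediate_value_Icc (le_min hx₂ hp)
      (f := fun x => ftheta θ (x, y₂)) (by unfold ftheta; fun_prop) ⟨hcorner, hend⟩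
    refine ⟨x, y₂, diag_mem_of_abs_le_left hA hL h ?_, hlevel, ?_⟩
    · exact (abs_of_nonneg hx.1).trans_le (hx.2.trans (min_le_left _ _))
    · linarith [hx.2.trans (min_le_right _ _)]

lemma exists_diag_mem_ftheta_eq_le_sub (hA : Isotropic A) (hL : LaminationConvex A)
    (h : !![x₁, 0; 0, y₁] ∈ A) (hp : 0 ≤ p) (hθ : 0 ≤ θ) (hpx : p ≤ x₁) (hyq : y₁ ≤ q)
    (hle : ftheta θ (p, q) ≤ ftheta θ (x₁, y₁)) :
    ∃ x y, !![x, 0; 0, y] ∈ A ∧ ftheta θ (x, y) = ftheta θ (p, q) ∧ y - x ≤ q - p := by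
  have hstart : ftheta θ (p, y₁) ≤ ftheta θ (p, q) := by
    rw [ftheta_eq_mul_add_sq, ftheta_eq_mul_add_sq]
    have := add_nonneg hp hθ
    gcongr
  obtain ⟨x, hx, hlevel⟩ := intermediate_value_Icc hpx
    (f := fun x => ftheta θ (x, y₁)) (by unfold ftheta; fun_prop) ⟨hstart, hle⟩
  refine ⟨x, y₁, diag_mem_of_abs_le_left hA hL h ?_, hlevel, by linarith [hx.1]⟩
  exact (abs_of_nonneg (hp.trans hx.1)).trans_le hx.2

lemma diag_mem_of_ftheta_le (hA : Isotropic A) (hL : LaminationConvex A)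
    (h₁ : !![x₁, 0; 0, y₁] ∈ A) (h₂ : !![x₂, 0; 0, y₂] ∈ A) (hx₂ : 0 ≤ x₂)
    (hp : 0 ≤ p) (hpq : p ≤ q) (hθ : θ ∈ Icc 0 q) (hpx : p ≤ x₁) (hyq : y₁ ≤ q) (hq : q ≤ y₂)
    (hle₁ : ftheta θ (p, q) ≤ ftheta θ (x₁, y₁)) (hle₂ : ftheta θ (p, q) ≤ ftheta θ (x₂, y₂)) :
    !![p, 0; 0, q] ∈ A := by
  obtain ⟨x, y, hmem, hlevel, hdiff⟩ :=
    exists_diag_mem_ftheta_eq_le_sub hA hL h₁ hp hθ.1 hpx hyq hle₁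
  obtain ⟨x', y', hmem', hlevel', hdiff'⟩ :=
    exists_diag_mem_ftheta_eq_sub_le hA hL h₂ hx₂ hp hpq hθ hq hle₂
  exact diag_mem_of_ftheta_eq hA hL hmem hmem' (sq_le_ftheta hp hθ.1 hθ.2) hlevel hlevel'
    ⟨hdiff, hdiff'⟩

lemma diag_mem_of_mul_le_mul (hA : Isotropic A) (hL : LaminationConvex A)
    (h : !![x, 0; 0, y] ∈ A) (hx : 0 ≤ x) (hp : 0 ≤ p) (hpq : p ≤ q) (hq : q ≤ y)
    (hle : p * q ≤ x * y) : !![p, 0; 0, q] ∈ A := by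
  rcases le_total q x with hqx | hxq
  · have hq₀ := hp.trans hpq
    refine diag_mem_of_abs_le hA hL h ?_ ?_
    · exact (abs_of_nonneg hp).trans_le (hpq.trans hqx)
    · exact (abs_of_nonneg hq₀).trans_le hq
  · exact diag_mem_of_ftheta_le (θ := 0) hA hL (hA.diag_swap_mem h) h hx hp hpq
      ⟨le_rfl, hp.trans hpq⟩ (hpq.trans hq) hxq hq
      (by simpa [ftheta, mul_comm y x] using hle) (by simpa [ftheta] using hle)

end LevelCurves

section CommonParameter

lemma exists_common_parameter {T X : Type*} [TopologicalSpace T] [TopologicalSpace X]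
    {I : Set T} (hI : IsPreconnected I) {K : Set X} (hK : IsCompact K) {C D : Set (T × X)}
    (hC : IsClosed C) (hD : IsClosed D) (hcover : ∀ t ∈ I, ∃ k ∈ K, (t, k) ∈ C ∪ D)
    (hIC : ∃ t ∈ I, ∃ k ∈ K, (t, k) ∈ C) (hID : ∃ t ∈ I, ∃ k ∈ K, (t, k) ∈ D) :
    ∃ t ∈ I, (∃ k ∈ K, (t, k) ∈ C) ∧ ∃ k ∈ K, (t, k) ∈ D := by
  have := isCompact_iff_compactSpace.mp hK
  have hproj {S : Set (T × X)} (hS : IsClosed S) : IsClosed {t | ∃ k ∈ K, (t, k) ∈ S} := by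
    convert isClosedMap_fst_of_compactSpace (Y := K) _
      (hS.preimage (continuous_id.prodMap continuous_subtype_val))
    ext t
    simp
  obtain ⟨t, ht, htC, htD⟩ := isPreconnected_closed_iff.mp hI _ _ (hproj hC) (hproj hD)
    (fun t ht => (hcover t ht).elim fun k hk => hk.2.imp (⟨k, hk.1, ·⟩) (⟨k, hk.1, ·⟩)) hIC hID
  exact ⟨t, ht, htC, htD⟩

variable {x y θ p q : ℝ}

lemma le_of_ftheta_self_le (hx : 0 ≤ x) (hy : 0 ≤ y) (h : ftheta q (p, q) ≤ ftheta q (x, y)) :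
    q ≤ y := by
  rw [ftheta_eq_mul_add_sq, ftheta_eq_mul_add_sq] at h
  by_contra! hlt
  have := mul_pos (add_pos_of_nonneg_of_pos hx (hy.trans_lt hlt)) (sub_pos.mpr hlt)
  linarith

lemma le_or_le_and_le_of_ftheta_le (hx : 0 ≤ x) (hy : 0 ≤ y) (hθ : θ ∈ Icc 0 q)
    (h : ftheta θ (p, q) ≤ ftheta θ (x, y)) : q ≤ y ∨ (p ≤ x ∧ y ≤ q) := by
  refine or_iff_not_imp_left.mpr fun hqy => ⟨?_, le_of_not_ge hqy⟩
  have hθq : θ < q := hθ.2.lt_of_ne (by rintro rfl; exact hqy (le_of_ftheta_self_le hx hy h))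
  have hmul : (p + θ) * (q - θ) ≤ (x + θ) * (q - θ) := calc
    (p + θ) * (q - θ) ≤ (x + θ) * (y - θ) := by
      simpa only [ftheta_eq_mul_add_sq, add_le_add_iff_right] using h
    _ ≤ (x + θ) * (q - θ) := by
      have := add_nonneg hx hθ.1
      gcongr
      exact le_of_not_ge hqy
  exact le_of_add_le_add_right (le_of_mul_le_mul_right hmul (sub_pos.mpr hθq))

-- At `θ = q` the point `k` given by `hsep` satisfies `q ≤ k.2`. If this never happens at `θ = 0`,
-- then by connectedness both alternatives occur for some `θ` in between.
lemma exists_ftheta_le_and_ftheta_le {K : Set (ℝ × ℝ)} (hK : IsCompact K)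
    (hK_nonneg : ∀ k ∈ K, 0 ≤ k.1 ∧ 0 ≤ k.2) (hq : 0 ≤ q)
    (hsep : ∀ θ ∈ Icc 0 q, ∃ k ∈ K, ftheta θ (p, q) ≤ ftheta θ k)
    (hzero : ∀ k ∈ K, ftheta 0 (p, q) ≤ ftheta 0 k → k.2 < q) :
    ∃ θ ∈ Icc 0 q, (∃ k ∈ K, ftheta θ (p, q) ≤ ftheta θ k ∧ q ≤ k.2) ∧
      ∃ k ∈ K, ftheta θ (p, q) ≤ ftheta θ k ∧ p ≤ k.1 ∧ k.2 ≤ q := by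
  have hclosed : IsClosed {X : ℝ × ℝ × ℝ | ftheta X.1 (p, q) ≤ ftheta X.1 X.2} := by
    unfold ftheta
    exact isClosed_le (by fun_prop) (by fun_prop)
  have hk_fst : Continuous fun X : ℝ × ℝ × ℝ => X.2.1 := by fun_prop
  have hk_snd : Continuous fun X : ℝ × ℝ × ℝ => X.2.2 := by fun_prop
  have hcases {θ : ℝ} (hθ : θ ∈ Icc 0 q) {k : ℝ × ℝ} (hk : k ∈ K)
      (h : ftheta θ (p, q) ≤ ftheta θ k) : q ≤ k.2 ∨ (p ≤ k.1 ∧ k.2 ≤ q) :=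
    le_or_le_and_le_of_ftheta_le (hK_nonneg k hk).1 (hK_nonneg k hk).2 hθ h
  refine exists_common_parameter isPreconnected_Icc hK
    (C := {X | ftheta X.1 (p, q) ≤ ftheta X.1 X.2 ∧ q ≤ X.2.2})
    (D := {X | ftheta X.1 (p, q) ≤ ftheta X.1 X.2 ∧ p ≤ X.2.1 ∧ X.2.2 ≤ q})
    (hclosed.inter (isClosed_le continuous_const hk_snd))
    (hclosed.inter ((isClosed_le continuous_const hk_fst).inter
      (isClosed_le hk_snd continuous_const))) ?_ ?_ ?_
  · intro θ hθ
    obtain ⟨k, hk, h⟩ := hsep θ hθ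
    exact ⟨k, hk, (hcases hθ hk h).imp (⟨h, ·⟩) (⟨h, ·⟩)⟩
  · have hmem : q ∈ Icc 0 q := ⟨hq, le_rfl⟩
    obtain ⟨k, hk, h⟩ := hsep q hmem
    exact ⟨q, hmem, k, hk, h, le_of_ftheta_self_le (hK_nonneg k hk).1 (hK_nonneg k hk).2 h⟩
  · have hmem : (0 : ℝ) ∈ Icc 0 q := ⟨le_rfl, hq⟩
    obtain ⟨k, hk, h⟩ := hsep 0 hmem
    exact ⟨0, hmem, k, hk, h, (hcases hmem hk h).resolve_left (hzero k hk h).not_ge⟩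

end CommonParameter

lemma pcHull_subset_of_isotropic_of_laminationConvex {A E : Set (Matrix (Fin 2) (Fin 2) ℝ)}
    (hA : Isotropic A) (hL : LaminationConvex A) (hE : IsCompact E) (hEA : E ⊆ A) :
    pcHull E ⊆ A := by
  intro ξ hξ
  have hdiag (η : Matrix (Fin 2) (Fin 2) ℝ) (hη : η ∈ E) : !![lam1 η, 0; 0, lam2 η] ∈ A :=
    hA.mem_iff_diag_lam.mp (hEA hη)
  have hp := lam1_nonneg ξ
  have hpq := lam1_le_lam2 ξ
  rw [hA.mem_iff_diag_lam]
  by_cases hzero : ∃ η ∈ E, lam2 ξ ≤ lam2 η ∧ lam1 ξ * lam2 ξ ≤ lam1 η * lam2 η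
  · obtain ⟨η, hη, hq, hle⟩ := hzero
    exact diag_mem_of_mul_le_mul hA hL (hdiag η hη) (lam1_nonneg η) hp hpq hq hle
  · push Not at hzero
    obtain ⟨θ, hθ, ⟨_, ⟨η, hη, rfl⟩, hle, hq⟩, _, ⟨ζ, hζ, rfl⟩, hle', hpx, hyq⟩ :=
      exists_ftheta_le_and_ftheta_le (p := lam1 ξ)
        (hE.image (continuous_lam1.prodMk continuous_lam2))
        (forall_mem_image.mpr fun η _ => ⟨lam1_nonneg η, (lam1_nonneg η).trans (lam1_le_lam2 η)⟩)
        (hp.trans hpq)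
        (fun θ hθ => exists_mem_image.mpr (exists_ftheta_le_of_mem_pcHull hE hξ hθ))
        (forall_mem_image.mpr fun η hη h => not_le.mp fun hq =>
          (hzero η hη hq).not_ge (by simpa [ftheta] using h))
    exact diag_mem_of_ftheta_le hA hL (hdiag ζ hζ) (hdiag η hη) (lam1_nonneg η) hp hpq hθ
      hpx hyq hq hle' hle

lemma pcHullOpen_subset_laminationHull {U : Set (Matrix (Fin 2) (Fin 2) ℝ)}
    (hU : Isotropic U) : pcHullOpen U ⊆ laminationHull U := by
  rintro ξ ⟨E, hEU, hE, hξ⟩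
  exact pcHull_subset_of_isotropic_of_laminationConvex (isotropic_laminationHull hU)
    laminationConvex_laminationHull hE (hEU.trans subset_laminationHull) hξ

theorem open_rcHull_eq_pcHull_eq_Pco_general (U : Set (Matrix (Fin 2) (Fin 2) ℝ))
    (hUiso : Isotropic U) : rcHullOpen U = pcHullOpen U ∧ pcHullOpen U = Pco U := by
  have hmain := pcHullOpen_subset_laminationHull hUiso
  exact ⟨rcHullOpen_subset_pcHullOpen.antisymm (hmain.trans laminationHull_subset_rcHullOpen),
    (hmain.trans laminationHull_subset_Pco).antisymm Pco_subset_pcHullOpen⟩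

/-- for an open isotropic bounded subset `U` of ℝ^{2×2},
`U^{rc} = U^{pc} = Pco U`. -/
theorem open_rcHull_eq_pcHull_eq_Pco (U : Set (Matrix (Fin 2) (Fin 2) ℝ))
    (hUo : IsOpen U) (hUiso : Isotropic U) (hUb : ∃ M : ℝ, ∀ ξ ∈ U, ∀ i j, |ξ i j| ≤ M) :
    rcHullOpen U = pcHullOpen U ∧ pcHullOpen U = Pco U :=
  open_rcHull_eq_pcHull_eq_Pco_general U hUiso
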